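/- Let X, Y be real Banach spaces, Ω ⊆ X open, and f : Ω → Y differentiable on Ω with Df Lipschitz continuous on Ω with exact Lipschitz bound lip(Df, Ω). Then for all x₁, x₂ ∈ Ω with the segment [x₁, x₂] ⊆ Ω, it holds ‖(f(x₁) + f(x₂))/2 − f((x₁ + x₂)/2)‖ ≤ (lip(Df, Ω)/8) · ‖x₁ − x₂‖². -/

import Mathlib

open Metric Set
open scoped NNReal ENNReal

/-- The modulus of convexity of a set `S` in a real normed space:
`δ_S(ε) = sup{δ ≥ 0 : B((x₁+x₂)/2, δ) ⊆ S for all x₁, x₂ ∈ S with ‖x₁ − x₂‖ = ε}`. -/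
noncomputable def setModulus {X : Type*} [NormedAddCommGroup X] [NormedSpace ℝ X]
    (S : Set X) (ε : ℝ) : ℝ :=
  sSup {δ : ℝ | 0 ≤ δ ∧ ∀ x₁ ∈ S, ∀ x₂ ∈ S, ‖x₁ - x₂‖ = ε →
    closedBall (midpoint ℝ x₁ x₂) δ ⊆ S}

/-- The exact bound of Lipschitz continuity of `h` on `U`:
the infimum of all Lipschitz constants of `h` on `U`. -/
noncomputable def lipOn {α β : Type*} [PseudoMetricSpace α] [PseudoMetricSpace β]
    (h : α → β) (U : Set α) : ℝ :=
  sInf {ℓ : ℝ | 0 ≤ ℓ ∧ ∀ x₁ ∈ U, ∀ x₂ ∈ U, dist (h x₁) (h x₂) ≤ ℓ * dist x₁ x₂}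

/-- The exact regularity bound of `f` around `x₀`: the infimum of all `κ ≥ 0` such that,
for some `δ > 0`, `dist(x, f⁻¹(y)) ≤ κ‖y − f(x)‖` for all `x ∈ B(x₀, δ)`, `y ∈ B(f(x₀), δ)`;
it equals `+∞` when `f` is not metrically regular around `x₀`. -/
noncomputable def regBound {X Y : Type*} [NormedAddCommGroup X] [NormedAddCommGroup Y]
    (f : X → Y) (x₀ : X) : ℝ≥0∞ :=
  sInf (ENNReal.ofReal '' {κ : ℝ | 0 ≤ κ ∧ ∃ δ > 0,
    ∀ x ∈ closedBall x₀ δ, ∀ y ∈ closedBall (f x₀) δ,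
      Metric.infDist x {x' | f x' = y} ≤ κ * ‖y - f x‖})

/-- `S ∈ U_c(X)`: `S` is a nonempty closed convex set whose modulus of convexity
satisfies `δ_S(ε) ≥ cε²` for all `ε ∈ (0, diam S)`. -/
def UniformlyConvexWith {X : Type*} [NormedAddCommGroup X] [NormedSpace ℝ X]
    (c : ℝ) (S : Set X) : Prop :=
  S.Nonempty ∧ IsClosed S ∧ Convex ℝ S ∧
    ∀ ε : ℝ, 0 < ε → ε < Metric.diam S → c * ε ^ 2 ≤ setModulus S ε

/-- The modulus of convexity of a normed space
`δ_X(ε) = inf{1 − ‖(x₁+x₂)/2‖ : x₁, x₂ ∈ B̄(0,1), ‖x₁ − x₂‖ = ε}`. -/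
noncomputable def spaceModulus (X : Type*) [NormedAddCommGroup X] [NormedSpace ℝ X]
    (ε : ℝ) : ℝ :=
  sInf {d : ℝ | ∃ x₁ ∈ closedBall (0 : X) 1, ∃ x₂ ∈ closedBall (0 : X) 1,
    ‖x₁ - x₂‖ = ε ∧ d = 1 - ‖midpoint ℝ x₁ x₂‖}

/-- `S` is `r`-convex (strongly convex of radius `r`): a nonempty intersection
`⋂_{x ∈ M} B̄(x, r)` for some `M ⊊ X`. -/
def RConvex {X : Type*} [NormedAddCommGroup X] (r : ℝ) (S : Set X) : Prop :=
  S.Nonempty ∧ ∃ M : Set X, M ≠ Set.univ ∧ S = ⋂ x ∈ M, closedBall x r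

/-- `f` is open at a linear rate around `x₀`. -/
def OpenAtLinearRate {X Y : Type*} [PseudoMetricSpace X] [PseudoMetricSpace Y]
    (f : X → Y) (x₀ : X) : Prop :=
  ∃ δ > (0 : ℝ), ∃ ζ > (0 : ℝ), ∃ σ > (0 : ℝ), ∀ x ∈ closedBall x₀ δ, ∀ r ∈ Icc (0 : ℝ) δ,
    closedBall (f x) (σ * r) ∩ closedBall (f x₀) ζ ⊆ f '' closedBall x r

/-!
Restrict `f` to the segment and put `g t = f (x₁ + t (x₂ - x₁))`. The second difference
`g (c + t) + g (c - t) - 2 g c` vanishes at `t = 0`, and its derivative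
`g' (c + t) - g' (c - t)` has norm at most `2 L ‖x₁ - x₂‖² t`. Hence the second difference has norm
at most `L ‖x₁ - x₂‖² t²`. The midpoint defect is half of it at `c = t = 1/2`, whence the
constant `L / 8`.
-/

theorem lipOn_nonneg {α β : Type*} [PseudoMetricSpace α] [PseudoMetricSpace β]
    (h : α → β) (U : Set α) : 0 ≤ lipOn h U :=
  Real.sInf_nonneg fun _ hℓ ↦ hℓ.1

theorem lipschitzOnWith_lipOn {α β : Type*} [PseudoMetricSpace α] [PseudoMetricSpace β]
    {h : α → β} {U : Set α} {K : ℝ≥0} (hK : LipschitzOnWith K h U) :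
    LipschitzOnWith (.mk (lipOn h U) (lipOn_nonneg h U)) h U := by
  refine LipschitzOnWith.of_dist_le_mul fun x hx y hy ↦ ?_
  rw [NNReal.coe_mk]
  rcases dist_nonneg.eq_or_lt' (a := dist x y) with hxy | hxy
  · simpa only [hxy, mul_zero] using hK.dist_le_mul x hx y hy
  · rw [← div_le_iff₀ hxy]
    refine le_csInf ⟨K, K.coe_nonneg, hK.dist_le_mul⟩ fun ℓ hℓ ↦ ?_
    exact (div_le_iff₀ hxy).2 (hℓ.2 x hx y hy)

theorem lipschitzOnWith_clm_apply {α 𝕜 E F : Type*} [PseudoMetricSpace α]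
    [NontriviallyNormedField 𝕜] [SeminormedAddCommGroup E] [NormedSpace 𝕜 E]
    [SeminormedAddCommGroup F] [NormedSpace 𝕜 F] {A : α → E →L[𝕜] F} {s : Set α} {K : ℝ≥0}
    (hA : LipschitzOnWith K A s) (v : E) :
    LipschitzOnWith (K * ‖v‖₊) (fun x ↦ A x v) s := by
  refine LipschitzOnWith.of_dist_le_mul fun x hx y hy ↦ ?_
  calc dist (A x v) (A y v)
      ≤ dist (A x) (A y) * ‖v‖ := by
        simpa only [dist_eq_norm] using! (A x - A y).le_opNorm v
    _ ≤ K * dist x y * ‖v‖ := by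
        gcongr
        exact hA.dist_le_mul x hx y hy
    _ = (K * ‖v‖₊ : ℝ≥0) * dist x y := by
        rw [NNReal.coe_mul, coe_nnnorm]
        ring

theorem midpoint_sub_eq_invOf_two_smul {R M : Type*} [Ring R] [Invertible (2 : R)]
    [AddCommGroup M] [Module R M] (x y z : M) :
    midpoint R x y - z = (⅟2 : R) • (x + y - (2 : R) • z) := by
  rw [midpoint_eq_smul_add, smul_sub, invOf_smul_smul]

section

variable {X Y : Type*} [NormedAddCommGroup X] [NormedSpace ℝ X]
  [NormedAddCommGroup Y] [NormedSpace ℝ Y]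

theorem hasDerivWithinAt_add_comp_symm {g g' : ℝ → Y} {c r t : ℝ}
    (hg : ∀ s ∈ Icc (c - r) (c + r), HasDerivWithinAt g (g' s) (Icc (c - r) (c + r)) s)
    (ht : t ∈ Icc 0 r) :
    HasDerivWithinAt (fun s ↦ g (c + s) + g (c - s)) (g' (c + t) - g' (c - t)) (Icc 0 r) t := by
  have hadd : MapsTo (fun s ↦ c + s) (Icc 0 r) (Icc (c - r) (c + r)) := fun s hs ↦
    ⟨by linarith [hs.1, hs.2], by linarith [hs.2]⟩
  have hsub : MapsTo (fun s ↦ c - s) (Icc 0 r) (Icc (c - r) (c + r)) := fun s hs ↦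
    ⟨by linarith [hs.2], by linarith [hs.1, hs.2]⟩
  have hright := (hg _ (hadd ht)).scomp t ((hasDerivWithinAt_id t _).const_add c) hadd
  have hleft := (hg _ (hsub ht)).scomp t ((hasDerivWithinAt_id t _).const_sub c) hsub
  simpa only [one_smul, neg_smul, ← sub_eq_add_neg] using! hright.add hleft

theorem norm_add_sub_two_smul_le_of_norm_deriv_sub_le {g g' : ℝ → Y} {c r C : ℝ} (hr : 0 ≤ r)
    (hg : ∀ t ∈ Icc (c - r) (c + r), HasDerivWithinAt g (g' t) (Icc (c - r) (c + r)) t)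
    (hg' : ∀ t ∈ Ico 0 r, ‖g' (c + t) - g' (c - t)‖ ≤ C * (2 * t)) :
    ‖g (c + r) + g (c - r) - (2 : ℝ) • g c‖ ≤ C * r ^ 2 := by
  have hderiv : ∀ t ∈ Icc 0 r, HasDerivWithinAt
      (fun s ↦ g (c + s) + g (c - s) - (2 : ℝ) • g c) (g' (c + t) - g' (c - t)) (Icc 0 r) t :=
    fun t ht ↦ (hasDerivWithinAt_add_comp_symm hg ht).sub_const _
  have hbound (t : ℝ) : HasDerivAt (fun s ↦ C * s ^ 2) (C * (2 * t)) t := by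
    simpa using (hasDerivAt_pow 2 t).const_mul C
  refine image_norm_le_of_norm_deriv_right_le_deriv_boundary
    (fun t ht ↦ (hderiv t ht).continuousWithinAt)
    (fun t ht ↦ (hderiv t (Ico_subset_Icc_self ht)).mono_of_mem_nhdsWithin
      (Icc_mem_nhdsGE_of_mem ht))
    ?_ hbound hg' (right_mem_Icc.2 hr)
  simp [two_smul]

theorem norm_midpoint_sub_le_of_lipschitzOnWith_deriv {g g' : ℝ → Y} {a b : ℝ} {K : ℝ≥0}
    (hab : a ≤ b) (hg : ∀ t ∈ Icc a b, HasDerivWithinAt g (g' t) (Icc a b) t)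
    (hg' : LipschitzOnWith K g' (Icc a b)) :
    ‖midpoint ℝ (g a) (g b) - g (midpoint ℝ a b)‖ ≤ K / 8 * (b - a) ^ 2 := by
  obtain ⟨c, hc⟩ : ∃ c, c = midpoint ℝ a b := ⟨_, rfl⟩
  obtain ⟨r, hr⟩ : ∃ r, r = (b - a) / 2 := ⟨_, rfl⟩
  have hc_eq : c = (a + b) / 2 := by
    rw [hc, midpoint_eq_smul_add, invOf_eq_inv, smul_eq_mul, inv_mul_eq_div]
  have ha : a = c - r := by rw [hc_eq, hr]; ring
  have hb : b = c + r := by rw [hc_eq, hr]; ring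
  have hr_nonneg : 0 ≤ r := by linarith
  have hincrement : ∀ t ∈ Ico 0 r, ‖g' (c + t) - g' (c - t)‖ ≤ K * (2 * t) := fun t ht ↦ by
    have hdist : dist (c + t) (c - t) = 2 * t := by
      rw [Real.dist_eq, add_sub_sub_cancel, ← two_mul, abs_of_nonneg (by linarith [ht.1])]
    rw [← hdist, ← dist_eq_norm]
    exact hg'.dist_le_mul _ ⟨by linarith [ht.1], by linarith [ht.2]⟩
      _ ⟨by linarith [ht.2], by linarith [ht.1]⟩
  have hsecond : ‖g b + g a - (2 : ℝ) • g c‖ ≤ K * r ^ 2 := by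
    rw [ha, hb] at hg ⊢
    exact norm_add_sub_two_smul_le_of_norm_deriv_sub_le hr_nonneg hg hincrement
  calc ‖midpoint ℝ (g a) (g b) - g (midpoint ℝ a b)‖
      = 2⁻¹ * ‖g b + g a - (2 : ℝ) • g c‖ := by
        rw [← hc, midpoint_comm, midpoint_sub_eq_invOf_two_smul, norm_smul, invOf_eq_inv,
          norm_inv, Real.norm_ofNat]
    _ ≤ 2⁻¹ * (K * r ^ 2) := by gcongr
    _ = K / 8 * (b - a) ^ 2 := by rw [hr]; ring

theorem norm_midpoint_sub_map_midpoint_le {f : X → Y} {f' : X → X →L[ℝ] Y} {K : ℝ≥0} {x₁ x₂ : X}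
    (hf : ∀ x ∈ segment ℝ x₁ x₂, HasFDerivWithinAt f (f' x) (segment ℝ x₁ x₂) x)
    (hf' : LipschitzOnWith K f' (segment ℝ x₁ x₂)) :
    ‖midpoint ℝ (f x₁) (f x₂) - f (midpoint ℝ x₁ x₂)‖ ≤ K / 8 * ‖x₁ - x₂‖ ^ 2 := by
  let γ : ℝ →ᵃ[ℝ] X := AffineMap.lineMap x₁ x₂
  have hγ : MapsTo γ (Icc 0 1) (segment ℝ x₁ x₂) := fun _ ↦ lineMap_mem_segment ℝ x₁ x₂
  have hγ₀ : γ 0 = x₁ := AffineMap.lineMap_apply_zero x₁ x₂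
  have hγ₁ : γ 1 = x₂ := AffineMap.lineMap_apply_one x₁ x₂
  have hderiv : ∀ t ∈ Icc (0 : ℝ) 1,
      HasDerivWithinAt (f ∘ γ) (f' (γ t) (x₂ - x₁)) (Icc 0 1) t := fun t ht ↦
    (hf _ (hγ ht)).comp_hasDerivWithinAt t AffineMap.hasDerivWithinAt_lineMap hγ
  have hlip : LipschitzOnWith (K * nndist x₁ x₂ * ‖x₂ - x₁‖₊)
      (fun t ↦ f' (γ t) (x₂ - x₁)) (Icc 0 1) :=
    lipschitzOnWith_clm_apply (hf'.comp (lipschitzWith_lineMap x₁ x₂).lipschitzOnWith hγ) _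
  calc ‖midpoint ℝ (f x₁) (f x₂) - f (midpoint ℝ x₁ x₂)‖
      = ‖midpoint ℝ ((f ∘ γ) 0) ((f ∘ γ) 1) - (f ∘ γ) (midpoint ℝ 0 1)‖ := by
        simp only [Function.comp_apply, γ.map_midpoint, hγ₀, hγ₁]
    _ ≤ (K * nndist x₁ x₂ * ‖x₂ - x₁‖₊ : ℝ≥0) / 8 * (1 - 0) ^ 2 :=
        norm_midpoint_sub_le_of_lipschitzOnWith_deriv zero_le_one hderiv hlip
    _ = K / 8 * ‖x₁ - x₂‖ ^ 2 := by
        simp only [NNReal.coe_mul, coe_nndist, coe_nnnorm, dist_eq_norm, norm_sub_rev x₂ x₁]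
        ring

theorem midpoint_estimate_C11_general {Ω : Set X} {f : X → Y} {f' : X → X →L[ℝ] Y}
    (hf : ∀ x ∈ Ω, HasFDerivWithinAt f (f' x) Ω x)
    (hlip : ∃ K : ℝ≥0, LipschitzOnWith K f' Ω)
    {x₁ x₂ : X} (hseg : segment ℝ x₁ x₂ ⊆ Ω) :
    ‖midpoint ℝ (f x₁) (f x₂) - f (midpoint ℝ x₁ x₂)‖ ≤ lipOn f' Ω / 8 * ‖x₁ - x₂‖ ^ 2 := by
  obtain ⟨K, hK⟩ := hlip
  exact norm_midpoint_sub_map_midpoint_le (fun x hx ↦ (hf x (hseg hx)).mono hseg)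
    ((lipschitzOnWith_lipOn hK).mono hseg)

end

/-- Remark 2.1 (i) of the paper: the second-order midpoint estimate for a
`C^{1,1}` mapping between Banach spaces. -/
theorem midpoint_estimate_C11
    {X Y : Type*} [NormedAddCommGroup X] [NormedSpace ℝ X] [CompleteSpace X]
    [NormedAddCommGroup Y] [NormedSpace ℝ Y] [CompleteSpace Y]
    (Ω : Set X) (hΩopen : IsOpen Ω) (f : X → Y)
    (hdiff : ∀ x ∈ Ω, DifferentiableAt ℝ f x)
    (hlip : ∃ K : ℝ≥0, LipschitzOnWith K (fderiv ℝ f) Ω)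
    (x₁ x₂ : X) (hseg : segment ℝ x₁ x₂ ⊆ Ω) :
    ‖midpoint ℝ (f x₁) (f x₂) - f (midpoint ℝ x₁ x₂)‖ ≤
      lipOn (fderiv ℝ f) Ω / 8 * ‖x₁ - x₂‖ ^ 2 :=
  midpoint_estimate_C11_general (fun x hx ↦ (hdiff x hx).hasFDerivAt.hasFDerivWithinAt) hlip hseg
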